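/- arXiv:2208.09643 — 7 statements merged into one kernel-verified Lean document; each statement's English description precedes it below -/
import Mathlib

section
/- Let G=(V,E) be a graph with V={1,...,n} and let C be a star with p ≥ 1 edges. Let μ(C) ∈ ℝ^n be the mean of the points {v^e : e ∈ C}. Then the sum over e ∈ C of the squared Euclidean distances ‖v^e − μ(C)‖₂² equals p − 1. -/
open Finset

/-- The point in `ℝ^n` associated with an edge `e`: coordinate `i` is `1`
if vertex `i` is incident to `e`, and `0` otherwise. -/
noncomputable def edgePoint {n : ℕ} (e : Sym2 (Fin n)) : Fin n → ℝ :=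
  fun i => if i ∈ e then 1 else 0

/-- The mean of the points associated with the edges of `C`. -/
noncomputable def clusterMean {n : ℕ} (C : Finset (Sym2 (Fin n))) : Fin n → ℝ :=
  fun i => (∑ e ∈ C, edgePoint e i) / (C.card : ℝ)

/-!
The incidence vectors of two edges have inner product equal to the number of common endpoints:
`2` for an edge with itself and `1` for two distinct edges of a star. For any `p` vectors whose
Gram matrix has a constant diagonal `a` and constant off-diagonal entries `b`, expanding the squares
gives total squared distance `p a - (p a + p (p - 1) b) / p = (p - 1) (a - b)` to the mean.
-/

theorem sum_dotProduct_sum_of_gram_eq {κ ι R : Type*} [Fintype ι] [NonAssocRing R]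
    {s : Finset κ} {x : κ → ι → R} {a b : R} (hdiag : ∀ k ∈ s, x k ⬝ᵥ x k = a)
    (hoff : (s : Set κ).Pairwise fun k l ↦ x k ⬝ᵥ x l = b) :
    (∑ k ∈ s, x k) ⬝ᵥ (∑ k ∈ s, x k) = #s * (a + (#s - 1) * b) := by
  classical
  have hrow : ∀ k ∈ s, x k ⬝ᵥ ∑ l ∈ s, x l = a + (#s - 1) * b := by
    intro k hk
    have hrest : ∀ l ∈ s.erase k, x k ⬝ᵥ x l = b := fun l hl ↦
      hoff hk (mem_of_mem_erase hl) (ne_of_mem_erase hl).symm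
    rw [dotProduct_sum, ← add_sum_erase s _ hk, hdiag k hk, sum_congr rfl hrest, sum_const,
      nsmul_eq_mul, cast_card_erase_of_mem hk]
  rw [sum_dotProduct, sum_congr rfl hrow, sum_const, nsmul_eq_mul]

section SquaredDeviation

variable {κ ι K : Type*} [Field K]

theorem sum_sq_sub_mean (s : Finset κ) (f : κ → K) :
    ∑ k ∈ s, (f k - (∑ j ∈ s, f j) / #s) ^ 2 = ∑ k ∈ s, f k ^ 2 - (∑ k ∈ s, f k) ^ 2 / #s := by
  simp only [sub_sq, sum_add_distrib, sum_sub_distrib, ← sum_mul, ← mul_sum, sum_const,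
    nsmul_eq_mul]
  rcases eq_or_ne (#s : K) 0 with hs | hs
  · simp [hs]
  · field_simp
    ring

variable [Fintype ι]

theorem sum_sum_sq_sub_mean (s : Finset κ) (x : κ → ι → K) :
    ∑ k ∈ s, ∑ i, (x k i - (∑ j ∈ s, x j i) / #s) ^ 2 =
      ∑ k ∈ s, x k ⬝ᵥ x k - (∑ k ∈ s, x k) ⬝ᵥ (∑ k ∈ s, x k) / #s := by
  rw [sum_comm]
  simp only [sum_sq_sub_mean, sum_sub_distrib, ← sum_div, dotProduct, Finset.sum_apply, ← sq]
  rw [sum_comm]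

theorem sum_sum_sq_sub_mean_of_gram_eq {s : Finset κ} {x : κ → ι → K} {a b : K}
    (hs : (#s : K) ≠ 0) (hdiag : ∀ k ∈ s, x k ⬝ᵥ x k = a)
    (hoff : (s : Set κ).Pairwise fun k l ↦ x k ⬝ᵥ x l = b) :
    ∑ k ∈ s, ∑ i, (x k i - (∑ j ∈ s, x j i) / #s) ^ 2 = (#s - 1) * (a - b) := by
  rw [sum_sum_sq_sub_mean, sum_dotProduct_sum_of_gram_eq hdiag hoff, sum_congr rfl hdiag,
    sum_const, nsmul_eq_mul, mul_div_cancel_left₀ _ hs]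
  ring

end SquaredDeviation

theorem toFinset_inter_toFinset_eq_singleton {V : Type*} [DecidableEq V] {e f : Sym2 V} {v : V}
    (he : v ∈ e) (hf : v ∈ f) (hne : e ≠ f) : e.toFinset ∩ f.toFinset = {v} := by
  ext w
  simp only [mem_inter, Sym2.mem_toFinset, mem_singleton]
  refine ⟨fun ⟨hwe, hwf⟩ ↦ ?_, fun hw ↦ hw ▸ ⟨he, hf⟩⟩
  by_contra hwv
  exact hne (Sym2.eq_of_ne_mem hwv hwe he hwf hf)

theorem edgePoint_dotProduct_edgePoint {n : ℕ} (e f : Sym2 (Fin n)) :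
    edgePoint e ⬝ᵥ edgePoint f = #(e.toFinset ∩ f.toFinset) := by
  simp only [dotProduct, edgePoint, ← ite_and, mul_ite, mul_one, mul_zero, sum_boole]
  congr 2
  ext i
  simp [and_comm]

theorem edgePoint_dotProduct_self {n : ℕ} {e : Sym2 (Fin n)} (he : ¬e.IsDiag) :
    edgePoint e ⬝ᵥ edgePoint e = 2 := by
  rw [edgePoint_dotProduct_edgePoint, inter_self, Sym2.card_toFinset_of_not_isDiag e he,
    Nat.cast_ofNat]

theorem edgePoint_dotProduct_of_ne {n : ℕ} {e f : Sym2 (Fin n)} {v : Fin n}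
    (he : v ∈ e) (hf : v ∈ f) (hne : e ≠ f) : edgePoint e ⬝ᵥ edgePoint f = 1 := by
  rw [edgePoint_dotProduct_edgePoint, toFinset_inter_toFinset_eq_singleton he hf hne,
    card_singleton, Nat.cast_one]

theorem stmt_1 {n : ℕ} (G : SimpleGraph (Fin n)) [DecidableRel G.Adj]
    (C : Finset (Sym2 (Fin n))) (hC : C ⊆ G.edgeFinset)
    (p : ℕ) (hp : 1 ≤ p) (hcard : C.card = p)
    (v : Fin n) (hstar : ∀ e ∈ C, v ∈ e) :
    ∑ e ∈ C, ∑ i, (edgePoint e i - clusterMean C i) ^ 2 = (p : ℝ) - 1 := by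
  subst hcard
  have hcard_ne : (#C : ℝ) ≠ 0 := Nat.cast_ne_zero.mpr (Nat.one_le_iff_ne_zero.mp hp)
  have hdiag : ∀ e ∈ C, edgePoint e ⬝ᵥ edgePoint e = 2 := fun e he ↦
    edgePoint_dotProduct_self (G.not_isDiag_of_mem_edgeFinset (hC he))
  have hoff : (C : Set (Sym2 (Fin n))).Pairwise fun e f ↦ edgePoint e ⬝ᵥ edgePoint f = 1 :=
    fun e he f hf hne ↦ edgePoint_dotProduct_of_ne (hstar e he) (hstar f hf) hne
  calc
    ∑ e ∈ C, ∑ i, (edgePoint e i - clusterMean C i) ^ 2 = ((#C : ℝ) - 1) * (2 - 1) :=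
      sum_sum_sq_sub_mean_of_gram_eq hcard_ne hdiag hoff
    _ = (#C : ℝ) - 1 := by ring
end

section
/- Let G=(V,E) be a graph with V={1,...,n} and let S={i₁ < i₂ < ... < i_k} be a vertex cover of G. For j=1,...,k let E_j be the set of edges e such that vertex i_j is incident to e and no vertex i_{j'} with j' < j is incident to e, and assume each E_j is nonempty. Then (E₁,...,E_k) is a partition of E into k stars, and the sum over j of the sums of squared Euclidean distances of the points {v^e : e ∈ E_j} to their mean equals |E| − k. -/
open Finset

/-- A set of edges is a star if all its edges share a common vertex. -/
def IsStar {n : ℕ} (C : Finset (Sym2 (Fin n))) : Prop :=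
  ∃ v : Fin n, ∀ e ∈ C, v ∈ e

/-!
Two distinct edges of a star have points that differ in exactly two coordinates, so the points of a
star are pairwise at squared distance `2`. By the identity
`2 |C| ∑ ‖x_a - mean‖² = ∑ ∑ ‖x_a - x_b‖²`, a star with `m ≥ 1` edges then contributes `m - 1`, and
summing over `k` stars that partition the edges gives `|E| - k`.
-/

section Variance

variable {α κ : Type*}

lemma two_mul_card_mul_sum_sub_mean_sq {K : Type*} [Field K] [CharZero K] (s : Finset α)
    (x : α → K) :
    2 * #s * ∑ a ∈ s, (x a - (∑ b ∈ s, x b) / #s) ^ 2 = ∑ a ∈ s, ∑ b ∈ s, (x a - x b) ^ 2 := by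
  obtain rfl | hs := s.eq_empty_or_nonempty
  · simp
  have hcard : (#s : K) ≠ 0 := Nat.cast_ne_zero.mpr hs.card_ne_zero
  simp only [sub_sq, sum_add_distrib, sum_sub_distrib, sum_const, nsmul_eq_mul, ← mul_sum,
    ← sum_mul]
  field_simp
  ring

/-- The sum of the squared Euclidean distances of the points `x a`, for `a ∈ C`, to their mean:
the `k`-means cost of the cluster `C`. Points are plain functions, so the distance is written out in
coordinates. -/
noncomputable def clusterCost [Fintype κ] (x : α → κ → ℝ) (C : Finset α) : ℝ :=
  ∑ a ∈ C, ∑ i, (x a i - (∑ b ∈ C, x b i) / #C) ^ 2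

variable [Fintype κ]

lemma two_mul_card_mul_clusterCost (x : α → κ → ℝ) (C : Finset α) :
    2 * #C * clusterCost x C = ∑ a ∈ C, ∑ b ∈ C, ∑ i, (x a i - x b i) ^ 2 := by
  calc 2 * #C * clusterCost x C
      = ∑ i, 2 * #C * ∑ a ∈ C, (x a i - (∑ b ∈ C, x b i) / #C) ^ 2 := by
        rw [clusterCost, sum_comm, mul_sum]
    _ = ∑ i, ∑ a ∈ C, ∑ b ∈ C, (x a i - x b i) ^ 2 := by
        simp only [two_mul_card_mul_sum_sub_mean_sq]
    _ = ∑ a ∈ C, ∑ b ∈ C, ∑ i, (x a i - x b i) ^ 2 := by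
        rw [sum_comm]
        exact sum_congr rfl fun a _ ↦ sum_comm

lemma clusterCost_eq_of_equidistant {x : α → κ → ℝ} {C : Finset α} {d : ℝ} (hC : C.Nonempty)
    (hd : (C : Set α).Pairwise fun a b ↦ ∑ i, (x a i - x b i) ^ 2 = d) :
    clusterCost x C = d / 2 * (#C - 1) := by
  classical
  have hrow : ∀ a ∈ C, ∑ b ∈ C, ∑ i, (x a i - x b i) ^ 2 = (#C - 1) * d := fun a ha ↦ by
    calc ∑ b ∈ C, ∑ i, (x a i - x b i) ^ 2
        = ∑ b ∈ C.erase a, ∑ i, (x a i - x b i) ^ 2 := (sum_erase C (by simp)).symm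
      _ = ∑ _b ∈ C.erase a, d :=
          sum_congr rfl fun b hb ↦ hd ha (mem_of_mem_erase hb) (ne_of_mem_erase hb).symm
      _ = (#C - 1) * d := by rw [sum_const, nsmul_eq_mul, cast_card_erase_of_mem ha]
  have hcard : (#C : ℝ) ≠ 0 := Nat.cast_ne_zero.mpr hC.card_ne_zero
  have hcost : 2 * #C * clusterCost x C = #C * ((#C - 1) * d) := by
    rw [two_mul_card_mul_clusterCost, sum_congr rfl hrow, sum_const, nsmul_eq_mul]
  apply mul_left_cancel₀ hcard
  linear_combination hcost / 2

end Variance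

section Star

variable {V : Type*} [DecidableEq V]

/-- The `0`-`1` incidence vector of an edge: `edgePoint` over an arbitrary vertex type. -/
noncomputable def incidenceVector (e : Sym2 V) : V → ℝ :=
  fun i ↦ if i ∈ e then 1 else 0

lemma incidenceVector_mk_of_ne {v w : V} (h : v ≠ w) :
    incidenceVector s(v, w) = Pi.single v 1 + Pi.single w 1 := by
  ext i
  by_cases hi : i = v
  · simp [incidenceVector, hi, h]
  · simp [incidenceVector, Pi.single_apply, hi]

variable [Fintype V]

lemma sum_incidenceVector_sub_sq_of_mem {e e' : Sym2 V} {v : V} (he : ¬e.IsDiag)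
    (he' : ¬e'.IsDiag) (hv : v ∈ e) (hv' : v ∈ e') (hne : e ≠ e') :
    ∑ i, (incidenceVector e i - incidenceVector e' i) ^ 2 = 2 := by
  obtain ⟨a, rfl⟩ := hv
  obtain ⟨b, rfl⟩ := hv'
  have hab : a ≠ b := fun h ↦ hne (h ▸ rfl)
  calc ∑ i, (incidenceVector s(v, a) i - incidenceVector s(v, b) i) ^ 2
      = ∑ i, ((Pi.single a 1 : V → ℝ) i + (Pi.single b 1 : V → ℝ) i) := by
        refine sum_congr rfl fun i _ ↦ ?_
        rw [incidenceVector_mk_of_ne he, incidenceVector_mk_of_ne he']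
        by_cases hi : i = a
        · simp [hi, hab]
        · by_cases hi' : i = b <;> simp [hi, hi', hab.symm]
    _ = 2 := by
        rw [sum_add_distrib, Fintype.sum_pi_single', Fintype.sum_pi_single', one_add_one_eq_two]

lemma clusterCost_incidenceVector_of_star {C : Finset (Sym2 V)} {v : V} (hC : C.Nonempty)
    (hdiag : ∀ e ∈ C, ¬e.IsDiag) (hv : ∀ e ∈ C, v ∈ e) :
    clusterCost incidenceVector C = #C - 1 := by
  have hdist : (C : Set (Sym2 V)).Pairwise fun e e' ↦
      ∑ i, (incidenceVector e i - incidenceVector e' i) ^ 2 = 2 := fun e he e' he' ↦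
    sum_incidenceVector_sub_sq_of_mem (hdiag e he) (hdiag e' he') (hv e he) (hv e' he')
  rw [clusterCost_eq_of_equidistant hC hdist, div_self two_ne_zero, one_mul]

end Star

section Partition

variable {V ι : Type*} [Fintype V] [DecidableEq V] [LinearOrder ι] [LocallyFiniteOrderBot ι]
  (G : SimpleGraph V) [DecidableRel G.Adj] (f : ι → V)

/-- The edges of `G` whose first endpoint in the enumeration `f` is `f j`, as a family indexed by
`j`: the sets `E_j` of the informal statement. -/
def firstIncidenceFinset : ι → Finset (Sym2 V) :=
  disjointed fun j ↦ G.incidenceFinset (f j)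

variable {G f}

lemma mem_firstIncidenceFinset {j : ι} {e : Sym2 V} :
    e ∈ firstIncidenceFinset G f j ↔ e ∈ G.edgeFinset ∧ f j ∈ e ∧ ∀ j' < j, f j' ∉ e := by
  simp only [firstIncidenceFinset, disjointed_apply, SimpleGraph.incidenceFinset_eq_filter,
    mem_sdiff, mem_sup, mem_Iio, mem_filter]
  grind

lemma biUnion_firstIncidenceFinset [Fintype ι] (hcover : ∀ e ∈ G.edgeFinset, ∃ j, f j ∈ e) :
    univ.biUnion (firstIncidenceFinset G f) = G.edgeFinset := by
  rw [firstIncidenceFinset, ← sup_eq_biUnion, Fintype.sup_disjointed]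
  ext e
  simpa [SimpleGraph.incidenceFinset_eq_filter] using hcover e

lemma clusterCost_firstIncidenceFinset {j : ι} (hne : (firstIncidenceFinset G f j).Nonempty) :
    clusterCost incidenceVector (firstIncidenceFinset G f j) =
      #(firstIncidenceFinset G f j) - 1 :=
  clusterCost_incidenceVector_of_star hne
    (fun _ he ↦ G.not_isDiag_of_mem_edgeFinset (mem_firstIncidenceFinset.mp he).1)
    (fun _ he ↦ (mem_firstIncidenceFinset.mp he).2.1)

end Partition

open scoped Function in
theorem stmt_2_general {V ι : Type*} [Fintype V] [DecidableEq V] [LinearOrder ι]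
    [LocallyFiniteOrderBot ι] [Fintype ι] (G : SimpleGraph V) [DecidableRel G.Adj] (f : ι → V)
    (hcover : ∀ e ∈ G.edgeFinset, ∃ j, f j ∈ e)
    (hne : ∀ j, (firstIncidenceFinset G f j).Nonempty) :
    Pairwise (Disjoint on firstIncidenceFinset G f) ∧
    G.edgeFinset = univ.biUnion (firstIncidenceFinset G f) ∧
    (∀ j, ∃ v, ∀ e ∈ firstIncidenceFinset G f j, v ∈ e) ∧
    ∑ j, clusterCost incidenceVector (firstIncidenceFinset G f j) =
      #G.edgeFinset - Fintype.card ι := by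
  have hdisj : Pairwise (Disjoint on firstIncidenceFinset G f) :=
    disjoint_disjointed _
  have hunion := biUnion_firstIncidenceFinset hcover
  refine ⟨hdisj, hunion.symm, fun j ↦ ⟨f j, fun e he ↦ (mem_firstIncidenceFinset.mp he).2.1⟩, ?_⟩
  calc ∑ j, clusterCost incidenceVector (firstIncidenceFinset G f j)
      = ∑ j, ((#(firstIncidenceFinset G f j) : ℝ) - 1) :=
        sum_congr rfl fun j _ ↦ clusterCost_firstIncidenceFinset (hne j)
    _ = #(univ.biUnion (firstIncidenceFinset G f)) - Fintype.card ι := by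
        rw [card_biUnion (hdisj.set_pairwise _)]
        simp
    _ = #G.edgeFinset - Fintype.card ι := by rw [hunion]

theorem stmt_2 {n k : ℕ} (G : SimpleGraph (Fin n)) [DecidableRel G.Adj]
    (f : Fin k → Fin n) (hmono : StrictMono f)
    (hcover : ∀ e ∈ G.edgeFinset, ∃ j : Fin k, f j ∈ e)
    (E : Fin k → Finset (Sym2 (Fin n)))
    (hE : ∀ j : Fin k,
      E j = G.edgeFinset.filter (fun e => f j ∈ e ∧ ∀ j' : Fin k, j' < j → f j' ∉ e))
    (hne : ∀ j : Fin k, (E j).Nonempty) :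
    (∀ j j' : Fin k, j ≠ j' → Disjoint (E j) (E j')) ∧
    (G.edgeFinset = Finset.univ.biUnion E) ∧
    (∀ j : Fin k, IsStar (E j)) ∧
    (∑ j : Fin k, ∑ e ∈ E j, ∑ i, (edgePoint e i - clusterMean (E j) i) ^ 2
      = (G.edgeFinset.card : ℝ) - (k : ℝ)) := by
  obtain rfl : E = firstIncidenceFinset G f := by
    ext j e
    rw [hE, mem_filter, mem_firstIncidenceFinset]
  have hgeneral := stmt_2_general G f hcover hne
  -- `edgePoint`, `clusterMean` and `IsStar` unfold to the notions used in `hgeneral`.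
  rwa [Fintype.card_fin] at hgeneral
end

section
/- Let G=(V,E) be a graph with V={1,...,n} and let C be a nonempty set of p edges of G. Then the minimum over μ ∈ ℝ^n of the sum over e ∈ C of the ℓ₁-distances ‖v^e − μ‖₁ equals Σ_{i=1}^n min{d_C(i), p − d_C(i)}, where d_C(i) is the number of edges of C incident to vertex i. -/
open Finset

/-- `edgeDeg C i` is the number of edges of `C` incident to vertex `i`. -/
def edgeDeg {n : ℕ} (C : Finset (Sym2 (Fin n))) (i : Fin n) : ℕ :=
  (C.filter (fun e => i ∈ e)).card

/-!
Exchanging the two sums separates the coordinates of `μ`. Coordinate `i` contributes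
`d * |1 - t| + (p - d) * |0 - t|`, where `d` of the `p` points have entry `1` and the others
entry `0`, and a weighted sum of distances to two points is least at the point of larger weight.
-/

theorem isLeast_range_sum_apply {ι M : Type*} {α : ι → Type*} [Fintype ι] [AddCommMonoid M]
    [Preorder M] [AddLeftMono M] {f : ∀ i, α i → M} {a : ι → M}
    (h : ∀ i, IsLeast (Set.range (f i)) (a i)) :
    IsLeast (Set.range fun x : ∀ i, α i => ∑ i, f i (x i)) (∑ i, a i) := by
  constructor
  · choose x hx using fun i => (h i).1
    exact ⟨x, sum_congr rfl fun i _ => hx i⟩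
  · rintro _ ⟨x, rfl⟩
    exact sum_le_sum fun i _ => (h i).2 ⟨x i, rfl⟩

section OrderedRing

variable {R : Type*} [Ring R] [LinearOrder R] [IsOrderedRing R]

theorem isLeast_range_mul_abs_sub_add_mul_abs_sub {a b : R} (ha : 0 ≤ a) (hb : 0 ≤ b) (x y : R) :
    IsLeast (Set.range fun t => a * |x - t| + b * |y - t|) (min a b * |x - y|) := by
  constructor
  · obtain hab | hba := le_total a b
    · exact ⟨y, by simp [hab]⟩
    · exact ⟨x, by simp [hba, abs_sub_comm y x]⟩
  · rintro _ ⟨t, rfl⟩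
    calc min a b * |x - y|
        ≤ min a b * (|x - t| + |t - y|) :=
          mul_le_mul_of_nonneg_left (abs_sub_le x t y) (le_min ha hb)
      _ = min a b * |x - t| + min a b * |y - t| := by rw [mul_add, abs_sub_comm t y]
      _ ≤ a * |x - t| + b * |y - t| := by
          gcongr
          exacts [min_le_left a b, min_le_right a b]

theorem isLeast_range_sum_abs_ite_sub {α : Type*} (C : Finset α) (q : α → Prop)
    [DecidablePred q] (x y : R) :
    IsLeast (Set.range fun t => ∑ e ∈ C, |(if q e then x else y) - t|)
      (min (#{e ∈ C | q e} : R) (#C - #{e ∈ C | q e}) * |x - y|) := by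
  have hcard : (#C - #{e ∈ C | q e} : R) = #{e ∈ C | ¬q e} := by
    rw [← card_filter_add_card_filter_not (s := C) q, Nat.cast_add, add_sub_cancel_left]
  have hsum (t : R) : ∑ e ∈ C, |(if q e then x else y) - t| =
      #{e ∈ C | q e} * |x - t| + #{e ∈ C | ¬q e} * |y - t| := by
    simp only [apply_ite (fun z => |z - t|), sum_ite, sum_const, nsmul_eq_mul]
  simp only [hcard, hsum]
  exact isLeast_range_mul_abs_sub_add_mul_abs_sub (Nat.cast_nonneg _) (Nat.cast_nonneg _) x y

theorem stmt_3_general {α ι : Type*} [Fintype ι] (C : Finset α) (r : α → ι → Prop)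
    [DecidableRel r] :
    IsLeast (Set.range fun μ : ι → R => ∑ e ∈ C, ∑ i, |(if r e i then 1 else 0) - μ i|)
      (∑ i, min (#{e ∈ C | r e i} : R) (#C - #{e ∈ C | r e i})) := by
  simp only [sum_comm (s := C)]
  exact isLeast_range_sum_apply fun i => by
    simpa only [sub_zero, abs_one, mul_one] using
      isLeast_range_sum_abs_ite_sub (R := R) C (r · i) 1 0

end OrderedRing

theorem stmt_3 {n : ℕ} (G : SimpleGraph (Fin n)) [DecidableRel G.Adj]
    (C : Finset (Sym2 (Fin n))) (hC : C ⊆ G.edgeFinset)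
    (p : ℕ) (hcard : C.card = p) (hne : C.Nonempty) :
    IsLeast {s : ℝ | ∃ μ : Fin n → ℝ, s = ∑ e ∈ C, ∑ i, |edgePoint e i - μ i|}
      (∑ i, min ((edgeDeg C i : ℝ)) ((p : ℝ) - (edgeDeg C i : ℝ))) := by
  subst hcard
  simpa only [Set.range, eq_comm, edgePoint, edgeDeg] using
    stmt_3_general (R := ℝ) C fun e i => i ∈ e
end

section
/- Let G=(V,E) be a triangle-free graph with V={1,...,n} in which every vertex has degree at most 3, and let C be a nonempty set of p edges of G that is not a star. Then Σ_{i=1}^n min{d_C(i), p − d_C(i)} ≥ (4/3)·p, where d_C(i) is the number of edges of C incident to vertex i. Consequently the optimal k-medians (ℓ₁) cost of the cluster {v^e : e ∈ C} is at least (4/3)·p. -/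
open Finset

/-!
Call a vertex heavy if it lies on more than half of the `p` edges. Two heavy vertices have a common
edge, so in a triangle-free graph there are at most two of them. Since the degrees sum to `2p`,
replacing `d` by `min d (p - d)` costs exactly the total excess `∑ (2d - p)` over heavy vertices.
If there are two, their degrees sum to at most `p + 1`, so the excess is at most `2 ≤ 2p/3`, where
`p ≥ 3` because `p/2 < d < p`. If there is one, the excess `2d - p` is at most `2p/3` exactly when
`6d ≤ 5p`, which follows from `d < p` and `d ≤ 5`; the bound `5` is sharp, as a star with six edges
together with a disjoint edge shows.
-/

section Graph

variable {V : Type*} [Fintype V] (G : SimpleGraph V) [DecidableRel G.Adj]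

/-- The vertices incident to more than half of the edges of `G`. They are exactly the coordinates
at which `min d (p - d)` differs from `d`. -/
def heavyVertices : Finset V :=
  {v | #G.edgeFinset < 2 * G.degree v}

lemma degree_add_degree_le_card_edgeFinset_add_card_inter [DecidableEq V] (a b : V) :
    G.degree a + G.degree b ≤
      #G.edgeFinset + #(G.incidenceFinset a ∩ G.incidenceFinset b) := by
  rw [← G.card_incidenceFinset_eq_degree a, ← G.card_incidenceFinset_eq_degree b,
    ← card_union_add_card_inter]
  gcongr
  exact union_subset (G.incidenceFinset_subset a) (G.incidenceFinset_subset b)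

lemma degree_add_degree_le_card_edgeFinset_add_one {a b : V} (hab : a ≠ b) :
    G.degree a + G.degree b ≤ #G.edgeFinset + 1 := by
  classical
  have hinter : #(G.incidenceFinset a ∩ G.incidenceFinset b) ≤ 1 := by
    refine (card_le_card (t := {s(a, b)}) ?_).trans_eq (card_singleton _)
    simpa [← coe_subset] using G.incidenceSet_inter_incidenceSet_subset hab
  exact (degree_add_degree_le_card_edgeFinset_add_card_inter G a b).trans (by gcongr)

variable {G}

lemma degree_add_degree_le_card_edgeFinset {a b : V} (hab : a ≠ b) (hadj : ¬G.Adj a b) :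
    G.degree a + G.degree b ≤ #G.edgeFinset := by
  classical
  have hinter : G.incidenceFinset a ∩ G.incidenceFinset b = ∅ := by
    simpa [← coe_inj] using G.incidenceSet_inter_incidenceSet_of_not_adj hadj hab
  simpa [hinter] using degree_add_degree_le_card_edgeFinset_add_card_inter G a b

lemma mem_heavyVertices {v : V} : v ∈ heavyVertices G ↔ #G.edgeFinset < 2 * G.degree v := by
  simp [heavyVertices]

lemma isClique_heavyVertices : G.IsClique (heavyVertices G : Set V) := by
  intro a ha b hb hab
  by_contra hadj
  have := degree_add_degree_le_card_edgeFinset hab hadj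
  have := mem_heavyVertices.1 ha
  have := mem_heavyVertices.1 hb
  lia

lemma card_heavyVertices_lt_of_cliqueFree {k : ℕ} (hG : G.CliqueFree k) :
    #(heavyVertices G) < k := by
  by_contra! hk
  exact hG.mono hk _ ⟨isClique_heavyVertices, rfl⟩

lemma three_mul_sum_excess_le_two_mul_card_edgeFinset (htf : G.CliqueFree 3)
    (hdeg : ∀ v, 6 * G.degree v ≤ 5 * #G.edgeFinset) :
    3 * ∑ v ∈ heavyVertices G, (2 * G.degree v - #G.edgeFinset) ≤ 2 * #G.edgeFinset := by
  classical
  have hcard : #(heavyVertices G) < 3 := card_heavyVertices_lt_of_cliqueFree htf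
  interval_cases h : #(heavyVertices G)
  · simp [card_eq_zero.1 h]
  · obtain ⟨a, ha⟩ := card_eq_one.1 h
    have := hdeg a
    rw [ha, sum_singleton]
    lia
  · obtain ⟨a, b, hab, hS⟩ := card_eq_two.1 h
    have ha : #G.edgeFinset < 2 * G.degree a := mem_heavyVertices.1 (by simp [hS])
    have hb : #G.edgeFinset < 2 * G.degree b := mem_heavyVertices.1 (by simp [hS])
    have hp : 3 ≤ #G.edgeFinset := by have := hdeg a; lia
    have := degree_add_degree_le_card_edgeFinset_add_one G hab
    rw [hS, sum_pair hab]
    lia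

variable (G) in
lemma degree_le_card_edgeFinset (v : V) : G.degree v ≤ #G.edgeFinset := by
  classical
  exact G.card_incidenceFinset_eq_degree v ▸ card_le_card (G.incidenceFinset_subset v)

variable (G) in
lemma sum_min_add_sum_excess :
    ∑ v, min (G.degree v) (#G.edgeFinset - G.degree v) +
      ∑ v ∈ heavyVertices G, (2 * G.degree v - #G.edgeFinset) = 2 * #G.edgeFinset := by
  have hexcess : ∑ v ∈ heavyVertices G, (2 * G.degree v - #G.edgeFinset) =
      ∑ v, (2 * G.degree v - #G.edgeFinset) :=
    sum_subset (subset_univ _) fun v _ hv ↦ by rw [mem_heavyVertices] at hv; lia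
  rw [hexcess, ← sum_add_distrib, ← G.sum_degrees_eq_twice_card_edges]
  exact sum_congr rfl fun v _ ↦ by have := degree_le_card_edgeFinset G v; lia

lemma four_mul_card_edgeFinset_le_three_mul_sum_min (htf : G.CliqueFree 3)
    (hdeg : ∀ v, 6 * G.degree v ≤ 5 * #G.edgeFinset) :
    4 * #G.edgeFinset ≤ 3 * ∑ v, min (G.degree v) (#G.edgeFinset - G.degree v) := by
  have := three_mul_sum_excess_le_two_mul_card_edgeFinset htf hdeg
  have := sum_min_add_sum_excess G
  lia

variable (G) in
lemma degree_eq_card_filter_edgeFinset [DecidableEq V] (v : V) :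
    G.degree v = #{e ∈ G.edgeFinset | v ∈ e} := by
  rw [← G.card_incidenceFinset_eq_degree, G.incidenceFinset_eq_filter]

lemma exists_le_edgeFinset_eq {C : Finset (Sym2 V)} (hC : C ⊆ G.edgeFinset) :
    ∃ H ≤ G, ∃ _ : DecidableRel H.Adj, H.edgeFinset = C := by
  classical
  have hC' : (C : Set (Sym2 V)) ⊆ G.edgeSet := by simpa [← coe_subset] using hC
  refine ⟨.fromEdgeSet C, ?_, inferInstance, ?_⟩
  · rw [SimpleGraph.fromEdgeSet_le]
    exact Set.sdiff_subset.trans hC'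
  · rw [← coe_inj, SimpleGraph.coe_edgeFinset, SimpleGraph.edgeSet_fromEdgeSet, sdiff_eq_left]
    exact Set.disjoint_left.2 fun e he ↦ G.not_isDiag_of_mem_edgeSet (hC' he)

lemma four_mul_card_le_three_mul_sum_min_card_filter [DecidableEq V] (htf : G.CliqueFree 3)
    (hdeg : ∀ v, G.degree v ≤ 5) {C : Finset (Sym2 V)} (hC : C ⊆ G.edgeFinset)
    (hnstar : ¬∃ v, ∀ e ∈ C, v ∈ e) :
    4 * #C ≤ 3 * ∑ v, min #{e ∈ C | v ∈ e} (#C - #{e ∈ C | v ∈ e}) := by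
  obtain ⟨H, hHG, _, rfl⟩ := exists_le_edgeFinset_eq hC
  simp only [← degree_eq_card_filter_edgeFinset H]
  refine four_mul_card_edgeFinset_le_three_mul_sum_min (htf.anti hHG) fun v ↦ ?_
  have hne : H.degree v ≠ #H.edgeFinset := fun h ↦
    hnstar ⟨v, card_filter_eq_iff.1 (degree_eq_card_filter_edgeFinset H v ▸ h)⟩
  have hlt : H.degree v < #H.edgeFinset := (degree_le_card_edgeFinset H v).lt_of_ne hne
  have hle : H.degree v ≤ 5 := (SimpleGraph.degree_le_of_le hHG).trans (hdeg v)
  lia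

end Graph

lemma min_card_filter_le_sum_abs_sub {ι R : Type*} [CommRing R] [LinearOrder R]
    [IsStrictOrderedRing R] (s : Finset ι) (P : ι → Prop) [DecidablePred P] (t : R) :
    min (#{a ∈ s | P a} : R) (#s - #{a ∈ s | P a}) ≤ ∑ a ∈ s, |(if P a then 1 else 0) - t| := by
  have hcard : (#{a ∈ s | P a} : R) + #{a ∈ s | ¬P a} = #s :=
    mod_cast card_filter_add_card_filter_not P
  rw [← hcard, add_sub_cancel_left]
  set m := min (#{a ∈ s | P a} : R) #{a ∈ s | ¬P a}
  have hm : 0 ≤ m := le_min (Nat.cast_nonneg _) (Nat.cast_nonneg _)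
  have htri : 1 ≤ |1 - t| + |0 - t| := by
    simpa [abs_sub_comm] using abs_sub_le 1 t 0
  calc m ≤ m * (|1 - t| + |0 - t|) := le_mul_of_one_le_right hm htri
    _ = m * |1 - t| + m * |0 - t| := mul_add ..
    _ ≤ #{a ∈ s | P a} * |1 - t| + #{a ∈ s | ¬P a} * |0 - t| := by
      gcongr
      exacts [min_le_left _ _, min_le_right _ _]
    _ = ∑ a ∈ s, |(if P a then 1 else 0) - t| := by
      simp only [apply_ite (fun x : R ↦ |x - t|), sum_ite, sum_const, nsmul_eq_mul]

theorem stmt_5_general {V : Type*} [Fintype V] [DecidableEq V] (G : SimpleGraph V)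
    [DecidableRel G.Adj] (htf : G.CliqueFree 3) (hdeg : ∀ v, G.degree v ≤ 5)
    (C : Finset (Sym2 V)) (hC : C ⊆ G.edgeFinset) (hnstar : ¬∃ v, ∀ e ∈ C, v ∈ e) :
    ((4 / 3 : ℝ) * #C ≤ ∑ v, min (#{e ∈ C | v ∈ e} : ℝ) (#C - #{e ∈ C | v ∈ e})) ∧
    ∀ μ : V → ℝ, (4 / 3 : ℝ) * #C ≤ ∑ e ∈ C, ∑ v, |(if v ∈ e then 1 else 0) - μ v| := by
  have hle (v : V) : #{e ∈ C | v ∈ e} ≤ #C := card_filter_le _ _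
  have hmin : (4 / 3 : ℝ) * #C ≤ ∑ v, min (#{e ∈ C | v ∈ e} : ℝ) (#C - #{e ∈ C | v ∈ e}) := by
    simp only [← Nat.cast_sub (hle _)]
    rw [div_mul_eq_mul_div, div_le_iff₀' (by norm_num)]
    exact_mod_cast four_mul_card_le_three_mul_sum_min_card_filter htf hdeg hC hnstar
  refine ⟨hmin, fun μ ↦ hmin.trans ?_⟩
  rw [sum_comm]
  exact sum_le_sum fun v _ ↦ min_card_filter_le_sum_abs_sub C (v ∈ ·) (μ v)

theorem stmt_5 {n : ℕ} (G : SimpleGraph (Fin n)) [DecidableRel G.Adj]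
    (htf : G.CliqueFree 3) (hdeg : ∀ v : Fin n, G.degree v ≤ 3)
    (C : Finset (Sym2 (Fin n))) (hC : C ⊆ G.edgeFinset)
    (p : ℕ) (hcard : C.card = p) (hne : C.Nonempty) (hnstar : ¬ IsStar C) :
    (∑ i, min ((edgeDeg C i : ℝ)) ((p : ℝ) - (edgeDeg C i : ℝ)) ≥ (4 / 3 : ℝ) * p) ∧
    (∀ μ : Fin n → ℝ, ∑ e ∈ C, ∑ i, |edgePoint e i - μ i| ≥ (4 / 3 : ℝ) * p) := by
  subst hcard
  exact stmt_5_general G htf (fun v ↦ (hdeg v).trans (by norm_num)) C hC hnstar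
end

section
/- Let G=(V,E) be a triangle-free graph with V={1,...,n} that has no vertex cover of size at most k. Then for every partition (C₁,...,C_k) of E into k groups, some group C_j contains two vertex-disjoint edges; consequently, for every choice of representatives μ₁,...,μ_k ∈ ℝ^n, the k-centers cost max_j max_{e∈C_j} ‖v^e − μ_j‖₂ is at least 1. -/
open Finset

/-- `S` is a vertex cover of `G`: every edge has an endpoint in `S`. -/
def IsVertexCover {n : ℕ} (G : SimpleGraph (Fin n)) [DecidableRel G.Adj]
    (S : Finset (Fin n)) : Prop :=
  ∀ e ∈ G.edgeFinset, ∃ v ∈ S, v ∈ e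

/-!
Suppose no cluster contains two vertex-disjoint edges. A triangle-free graph whose edges pairwise
meet is a star, so each cluster is covered by a single vertex, and these `k` vertices cover `G`.
Hence some cluster contains two disjoint edges. Their points are at distance `√(2 + 2) = 2`, so by
the triangle inequality no centre is at distance less than `1` from both.
-/

namespace TriangleFreeEdgeClustering

variable {V ι : Type*}

section VertexCover

variable {G H : SimpleGraph V}

theorem vertexCoverNum_sup_le :
    (G ⊔ H).vertexCoverNum ≤ G.vertexCoverNum + H.vertexCoverNum := by
  obtain ⟨s, hs, hsG⟩ := G.vertexCoverNum_exists
  obtain ⟨t, ht, htH⟩ := H.vertexCoverNum_exists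
  have hcover : (G ⊔ H).IsVertexCover (s ∪ t) := by
    rintro v w (hvw | hvw)
    · exact (hsG hvw).imp Or.inl Or.inl
    · exact (htH hvw).imp Or.inr Or.inr
  calc (G ⊔ H).vertexCoverNum ≤ (s ∪ t).encard := hcover.vertexCoverNum_le
    _ ≤ s.encard + t.encard := Set.encard_union_le s t
    _ = G.vertexCoverNum + H.vertexCoverNum := by rw [hs, ht]

theorem vertexCoverNum_iSup_le_sum [Fintype ι] (H : ι → SimpleGraph V) :
    (⨆ i, H i).vertexCoverNum ≤ ∑ i, (H i).vertexCoverNum := by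
  rw [← Finset.sup_univ_eq_iSup]
  exact Finset.apply_sup_le_sum (f := SimpleGraph.vertexCoverNum)
    SimpleGraph.vertexCoverNum_bot vertexCoverNum_sup_le Finset.univ

-- If no vertex met every edge, an edge `ab`, an edge `bc` missing `a` and an edge missing `b`
-- would form a triangle, because the third edge has to meet the first in `a` and the second in `c`.
theorem exists_forall_mem_of_cliqueFree_three (hG : G.CliqueFree 3) (hne : G.edgeSet.Nonempty)
    (hinter : ∀ e ∈ G.edgeSet, ∀ e' ∈ G.edgeSet, ¬ Disjoint (e : Set V) e') :
    ∃ v, ∀ e ∈ G.edgeSet, v ∈ e := by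
  by_contra! hmiss
  have meet {a b : V} {e : Sym2 V} (hab : G.Adj a b) (he : e ∈ G.edgeSet) (ha : a ∉ e) :
      b ∈ e := by
    simpa [Set.disjoint_left, ha] using hinter s(a, b) hab e he
  obtain ⟨⟨a, b⟩, hab⟩ := hne
  obtain ⟨e, he, hae⟩ := hmiss a
  obtain ⟨c, rfl⟩ : b ∈ e := meet hab he hae
  obtain ⟨e', he', hbe'⟩ := hmiss b
  have hae' : a ∈ e' := meet hab.symm he' hbe'
  have hce' : c ∈ e' := meet he he' hbe'
  have hac : a ≠ c := fun h => hae (h ▸ Sym2.mem_mk_right b c)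
  obtain rfl : e' = s(a, c) := (Sym2.mem_and_mem_iff hac).1 ⟨hae', hce'⟩
  classical
  exact hG {a, b, c} (SimpleGraph.is3Clique_triple_iff.2 ⟨hab, he', he⟩)

theorem vertexCoverNum_le_one_of_cliqueFree_three (hG : G.CliqueFree 3)
    (hinter : ∀ e ∈ G.edgeSet, ∀ e' ∈ G.edgeSet, ¬ Disjoint (e : Set V) e') :
    G.vertexCoverNum ≤ 1 := by
  obtain hempty | hne := G.edgeSet.eq_empty_or_nonempty
  · simp [SimpleGraph.edgeSet_eq_empty.1 hempty]
  obtain ⟨x, hx⟩ := exists_forall_mem_of_cliqueFree_three hG hne hinter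
  have hcover : G.IsVertexCover {x} := fun v w hvw => by
    simpa [eq_comm] using hx s(v, w) hvw
  simpa using hcover.vertexCoverNum_le

theorem exists_disjoint_edges_of_card_lt_vertexCoverNum [Fintype ι] {H : ι → SimpleGraph V}
    (hfree : ∀ i, (H i).CliqueFree 3) (hcard : Fintype.card ι < (⨆ i, H i).vertexCoverNum) :
    ∃ i, ∃ e ∈ (H i).edgeSet, ∃ e' ∈ (H i).edgeSet, Disjoint (e : Set V) e' := by
  by_contra! hinter
  refine hcard.not_ge ?_
  calc (⨆ i, H i).vertexCoverNum ≤ ∑ i, (H i).vertexCoverNum := vertexCoverNum_iSup_le_sum H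
    _ ≤ ∑ _i : ι, 1 := Finset.sum_le_sum fun i _ =>
        vertexCoverNum_le_one_of_cliqueFree_three (hfree i) (hinter i)
    _ = Fintype.card ι := by simp

end VertexCover

theorem ncard_coe_of_not_isDiag {e : Sym2 V} (he : ¬ e.IsDiag) : (e : Set V).ncard = 2 := by
  induction e with | _ a b
  rw [Sym2.coe_mk, Set.ncard_pair (by simpa using he)]

section IndicatorVector

variable [Fintype V]

/-- The `0`-`1` indicator vector of a set of coordinates, as a point of Euclidean space. For an
edge `e` viewed as its set of endpoints, it is the point `v^e`. -/
noncomputable def indicatorVector (s : Set V) : EuclideanSpace ℝ V :=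
  WithLp.toLp 2 (s.indicator 1)

theorem norm_indicatorVector_sq (s : Set V) : ‖indicatorVector s‖ ^ 2 = s.ncard := by
  classical
  simp [indicatorVector, EuclideanSpace.real_norm_sq_eq, Set.indicator_apply,
    Set.ncard_eq_toFinset_card']

theorem inner_indicatorVector_of_disjoint {s t : Set V} (hst : Disjoint s t) :
    inner ℝ (indicatorVector s) (indicatorVector t) = 0 := by
  have hmul (i : V) : t.indicator (1 : V → ℝ) i * s.indicator 1 i = 0 := by
    rw [← Set.inter_indicator_mul, hst.symm.inter_eq, Set.indicator_empty]
  simp [indicatorVector, PiLp.inner_apply, hmul]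

theorem dist_indicatorVector_of_disjoint {s t : Set V} (hst : Disjoint s t) :
    dist (indicatorVector s) (indicatorVector t) = √(s.ncard + t.ncard) := by
  rw [dist_eq_norm, norm_sub_eq_sqrt_iff_real_inner_eq_zero.2
    (inner_indicatorVector_of_disjoint hst)]
  simp only [← sq, norm_indicatorVector_sq]

theorem dist_indicatorVector_of_not_isDiag {e e' : Sym2 V}
    (he : ¬ e.IsDiag) (he' : ¬ e'.IsDiag) (hdisj : Disjoint (e : Set V) e') :
    dist (indicatorVector (e : Set V)) (indicatorVector e') = 2 := by
  rw [dist_indicatorVector_of_disjoint hdisj, ncard_coe_of_not_isDiag he,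
    ncard_coe_of_not_isDiag he', Real.sqrt_eq_iff_mul_self_eq] <;> norm_num

theorem one_le_dist_or_one_le_dist_of_not_isDiag {e e' : Sym2 V}
    (he : ¬ e.IsDiag) (he' : ¬ e'.IsDiag) (hdisj : Disjoint (e : Set V) e')
    (x : EuclideanSpace ℝ V) :
    1 ≤ dist (indicatorVector e) x ∨ 1 ≤ dist (indicatorVector e') x := by
  apply le_or_le_of_add_le_add
  calc (1 + 1 : ℝ) = dist (indicatorVector (e : Set V)) (indicatorVector e') := by
        rw [dist_indicatorVector_of_not_isDiag he he' hdisj, one_add_one_eq_two]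
    _ ≤ dist (indicatorVector e) x + dist (indicatorVector e') x := dist_triangle_right _ _ _

end IndicatorVector

variable {n : ℕ}

theorem exists_isVertexCover_card_le_of_vertexCoverNum_le {G : SimpleGraph (Fin n)}
    [DecidableRel G.Adj] {k : ℕ} (hG : G.vertexCoverNum ≤ k) :
    ∃ S : Finset (Fin n), IsVertexCover G S ∧ S.card ≤ k := by
  obtain ⟨s, hs, hcover⟩ := G.vertexCoverNum_exists
  lift s to Finset (Fin n) using s.toFinite
  refine ⟨s, ?_, by simpa [← hs] using hG⟩
  rintro ⟨a, b⟩ hab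
  obtain ha | hb := hcover (SimpleGraph.mem_edgeFinset.1 hab)
  · exact ⟨a, ha, Sym2.mem_mk_left a b⟩
  · exact ⟨b, hb, Sym2.mem_mk_right a b⟩

theorem dist_indicatorVector_toLp (e : Sym2 (Fin n)) (x : Fin n → ℝ) :
    dist (indicatorVector e) (WithLp.toLp 2 x) = √(∑ i, (edgePoint e i - x i) ^ 2) := by
  simp [EuclideanSpace.dist_eq, Real.dist_eq, indicatorVector, edgePoint, Set.indicator]

end TriangleFreeEdgeClustering

open TriangleFreeEdgeClustering

theorem stmt_12_general {V ι : Type*} [Fintype V] [Fintype ι] {G : SimpleGraph V}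
    (htf : G.CliqueFree 3) (hcard : Fintype.card ι < G.vertexCoverNum)
    {C : ι → Set (Sym2 V)} (hC : G.edgeSet = ⋃ j, C j) :
    (∃ j, ∃ e ∈ C j, ∃ e' ∈ C j, Disjoint (e : Set V) e') ∧
    ∀ μ : ι → EuclideanSpace ℝ V, ∃ j, ∃ e ∈ C j, 1 ≤ dist (indicatorVector e) (μ j) := by
  have hsup : ⨆ j, .fromEdgeSet (C j) = G := by
    rw [← SimpleGraph.fromEdgeSet_iUnion, ← hC, SimpleGraph.fromEdgeSet_edgeSet]
  have hfree j : (SimpleGraph.fromEdgeSet (C j)).CliqueFree 3 :=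
    htf.anti ((le_iSup _ j).trans_eq hsup)
  obtain ⟨j, e, he, e', he', hdisj⟩ :=
    exists_disjoint_edges_of_card_lt_vertexCoverNum hfree (by rwa [hsup])
  rw [SimpleGraph.edgeSet_fromEdgeSet] at he he'
  refine ⟨⟨j, e, he.1, e', he'.1, hdisj⟩, fun μ => ?_⟩
  obtain hle | hle := one_le_dist_or_one_le_dist_of_not_isDiag he.2 he'.2 hdisj (μ j)
  · exact ⟨j, e, he.1, hle⟩
  · exact ⟨j, e', he'.1, hle⟩

theorem stmt_12 {n : ℕ} (G : SimpleGraph (Fin n)) [DecidableRel G.Adj]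
    (htf : G.CliqueFree 3)
    (k : ℕ) (hnocover : ¬ ∃ S : Finset (Fin n), IsVertexCover G S ∧ S.card ≤ k)
    (C : Fin k → Finset (Sym2 (Fin n)))
    (hdisj : ∀ j j' : Fin k, j ≠ j' → Disjoint (C j) (C j'))
    (hunion : G.edgeFinset = Finset.univ.biUnion C) :
    (∃ j : Fin k, ∃ e ∈ C j, ∃ e' ∈ C j, ∀ v : Fin n, v ∈ e → v ∉ e') ∧
    (∀ μ : Fin k → (Fin n → ℝ),
      ∃ j : Fin k, ∃ e ∈ C j, Real.sqrt (∑ i, (edgePoint e i - μ j i) ^ 2) ≥ 1) := by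
  have ⟨hpair, hcost⟩ := stmt_12_general (C := fun j => (C j : Set (Sym2 (Fin n)))) htf
    (by simpa using mt exists_isVertexCover_card_le_of_vertexCoverNum_le hnocover)
    (by simp [← SimpleGraph.coe_edgeFinset, hunion])
  exact ⟨by simpa [Set.disjoint_left] using hpair,
    fun μ => by simpa [dist_indicatorVector_toLp] using hcost fun j => WithLp.toLp 2 (μ j)⟩
end

section
/- Let G=(V,E) be a graph with V={1,...,n} in which every vertex has degree at most 3, and let S={i₁ < ... < i_k} be a vertex cover of G such that each group E_j = {e ∈ E : i_j is incident to e and no i_{j'} with j' < j is incident to e} is nonempty. Taking the mean μ(E_j) of {v^e : e ∈ E_j} as the representative of E_j, every point v^e with e ∈ E_j satisfies ‖v^e − μ(E_j)‖₂ = √(1 − 1/|E_j|) ≤ √(2/3); hence the k-centers cost of the partition (E₁,...,E_k) is at most √(2/3). -/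
open Finset

/-!
Two distinct edges at a common vertex `c` share only `c`, so their points are at distance `√2`: the
edges of a star are mapped to the vertices of a regular simplex. A vertex of a regular simplex with
`m` vertices and edge length `r` has squared distance `r ^ 2 / 2 * (1 - 1 / m)` from the centroid.
Each group consists of edges at one vertex, whose degree bounds `m`.
-/

section Equidistant

variable {ι V P : Type*} [NormedAddCommGroup V] [InnerProductSpace ℝ V] [MetricSpace P]
  [NormedAddTorsor V P] {s : Finset ι} {p : ι → P} {r : ℝ}

theorem dist_sq_affineCombination_of_pairwise_dist_eq
    (hp : (s : Set ι).Pairwise fun i j => dist (p i) (p j) = r) {w₁ w₂ : ι → ℝ}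
    (hw₁ : ∑ i ∈ s, w₁ i = 1) (hw₂ : ∑ i ∈ s, w₂ i = 1) :
    dist (s.affineCombination ℝ p w₁) (s.affineCombination ℝ p w₂) ^ 2 =
      r ^ 2 / 2 * ∑ i ∈ s, (w₁ i - w₂ i) ^ 2 := by
  classical
  set u : ι → ℝ := w₁ - w₂ with hu
  have sum_u : ∑ i ∈ s, u i = 0 := by
    simp only [hu, Pi.sub_apply, sum_sub_distrib, hw₁, hw₂, sub_self]
  have row_sum : ∀ i ∈ s,
      ∑ j ∈ s, u i * u j * (dist (p i) (p j) * dist (p i) (p j)) = -(r ^ 2 * u i ^ 2) := by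
    intro i hi
    have dist_mul_dist : ∀ j ∈ s,
        dist (p i) (p j) * dist (p i) (p j) = r ^ 2 - if i = j then r ^ 2 else 0 := by
      intro j hj
      rcases eq_or_ne i j with rfl | hij
      · simp
      · rw [hp hi hj hij, if_neg hij]
        ring
    calc ∑ j ∈ s, u i * u j * (dist (p i) (p j) * dist (p i) (p j))
        = ∑ j ∈ s, (u i * r ^ 2 * u j - if i = j then u i * u j * r ^ 2 else 0) :=
          sum_congr rfl fun j hj => by rw [dist_mul_dist j hj, mul_sub, mul_ite, mul_zero]; ring
      _ = -(r ^ 2 * u i ^ 2) := by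
          rw [sum_sub_distrib, ← mul_sum, sum_u, sum_ite_eq, if_pos hi]
          ring
  calc dist (s.affineCombination ℝ p w₁) (s.affineCombination ℝ p w₂) ^ 2
      = (-∑ i ∈ s, ∑ j ∈ s, u i * u j * (dist (p i) (p j) * dist (p i) (p j))) / 2 := by
        rw [sq, EuclideanGeometry.dist_affineCombination p hw₁ hw₂]
    _ = r ^ 2 / 2 * ∑ i ∈ s, u i ^ 2 := by
        rw [sum_congr rfl row_sum, sum_neg_distrib, ← mul_sum]
        ring

theorem dist_sq_centroid_of_pairwise_dist_eq
    (hp : (s : Set ι).Pairwise fun i j => dist (p i) (p j) = r) {i : ι} (hi : i ∈ s) :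
    dist (p i) (s.centroid ℝ p) ^ 2 = r ^ 2 / 2 * (1 - 1 / (#s : ℝ)) := by
  classical
  have card_s_ne_zero : (#s : ℝ) ≠ 0 := Nat.cast_ne_zero.mpr (card_ne_zero_of_mem hi)
  rw [centroid_def, ← s.affineCombination_piSingle ℝ p hi,
    dist_sq_affineCombination_of_pairwise_dist_eq hp (by rw [sum_pi_single', if_pos hi])
      (s.sum_centroidWeights_eq_one_of_nonempty ℝ ⟨i, hi⟩)]
  congr 1
  calc ∑ j ∈ s, ((Pi.single i 1 : ι → ℝ) j - s.centroidWeights ℝ j) ^ 2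
      = ∑ j ∈ s, ((if j = i then 1 - 2 * (#s : ℝ)⁻¹ else 0) + (#s : ℝ)⁻¹ ^ 2) := by
        refine sum_congr rfl fun j _ => ?_
        rw [centroidWeights_apply, Pi.single_apply]
        split_ifs <;> ring
    _ = 1 - 1 / (#s : ℝ) := by
        rw [sum_add_distrib, sum_ite_eq', if_pos hi, sum_const, nsmul_eq_mul]
        field_simp
        ring

end Equidistant

section Star

variable {n : ℕ} {G : SimpleGraph (Fin n)} {c : Fin n} {C : Finset (Sym2 (Fin n))}
  {e e' : Sym2 (Fin n)}

theorem edgePoint_mk_of_ne {u v : Fin n} (h : u ≠ v) :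
    edgePoint s(u, v) = Pi.single u 1 + Pi.single v 1 := by
  ext i
  simp only [edgePoint, Sym2.mem_iff, Pi.add_apply, Pi.single_apply]
  grind

theorem dist_edgePoint_of_mem_incidenceSet (he : e ∈ G.incidenceSet c)
    (he' : e' ∈ G.incidenceSet c) (hne : e ≠ e') :
    dist (WithLp.toLp 2 (edgePoint e)) (WithLp.toLp 2 (edgePoint e')) = √2 := by
  obtain ⟨u, rfl⟩ := he.2
  obtain ⟨v, rfl⟩ := he'.2
  have huv : u ≠ v := fun h => hne (congrArg _ h)
  have orthogonal : inner ℝ (EuclideanSpace.single u (1 : ℝ)) (EuclideanSpace.single v 1) = 0 :=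
    EuclideanSpace.orthonormal_single.inner_eq_zero huv
  rw [edgePoint_mk_of_ne (G.ne_of_adj he.1), edgePoint_mk_of_ne (G.ne_of_adj he'.1),
    WithLp.toLp_add, WithLp.toLp_add, dist_add_left, PiLp.toLp_single, PiLp.toLp_single,
    dist_eq_norm, norm_sub_eq_sqrt_iff_real_inner_eq_zero.mpr orthogonal]
  norm_num

theorem toLp_clusterMean (hC : C.Nonempty) :
    WithLp.toLp 2 (clusterMean C) = C.centroid ℝ fun e => WithLp.toLp 2 (edgePoint e) := by
  rw [centroid_def, affineCombination_eq_linear_combination _ _ _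
    (C.sum_centroidWeights_eq_one_of_nonempty ℝ hC)]
  ext i
  simp [clusterMean, div_eq_inv_mul, mul_sum]

theorem sum_sq_edgePoint_sub_clusterMean (hC : ↑C ⊆ G.incidenceSet c) (he : e ∈ C) :
    ∑ i, (edgePoint e i - clusterMean C i) ^ 2 = 1 - 1 / (#C : ℝ) := by
  have equidistant : (C : Set (Sym2 (Fin n))).Pairwise fun x y =>
      dist (WithLp.toLp 2 (edgePoint x)) (WithLp.toLp 2 (edgePoint y)) = √2 :=
    fun x hx y hy hxy => dist_edgePoint_of_mem_incidenceSet (hC hx) (hC hy) hxy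
  calc ∑ i, (edgePoint e i - clusterMean C i) ^ 2
      = dist (WithLp.toLp 2 (edgePoint e)) (WithLp.toLp 2 (clusterMean C)) ^ 2 := by
        simp only [EuclideanSpace.dist_sq_eq, Real.dist_eq, sq_abs]
    _ = √2 ^ 2 / 2 * (1 - 1 / (#C : ℝ)) := by
        rw [toLp_clusterMean ⟨e, he⟩, dist_sq_centroid_of_pairwise_dist_eq equidistant he]
    _ = 1 - 1 / (#C : ℝ) := by norm_num

theorem stmt_13_general [DecidableRel G.Adj] {d : ℕ} (hdeg : G.degree c ≤ d)
    (hC : C ⊆ G.incidenceFinset c) (he : e ∈ C) :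
    √(∑ i, (edgePoint e i - clusterMean C i) ^ 2) = √(1 - 1 / (#C : ℝ)) ∧
      √(∑ i, (edgePoint e i - clusterMean C i) ^ 2) ≤ √(1 - 1 / (d : ℝ)) := by
  have card_C_pos : (0 : ℝ) < #C := Nat.cast_pos.mpr (card_pos.mpr ⟨e, he⟩)
  have card_C_le : #C ≤ d :=
    (card_le_card hC).trans (G.card_incidenceFinset_eq_degree c ▸ hdeg)
  rw [sum_sq_edgePoint_sub_clusterMean
    (fun x hx => (G.mem_incidenceFinset c x).mp (hC hx)) he]
  exact ⟨rfl, by gcongr⟩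

end Star

theorem stmt_13 {n k : ℕ} (G : SimpleGraph (Fin n)) [DecidableRel G.Adj]
    (hdeg : ∀ v : Fin n, G.degree v ≤ 3)
    (f : Fin k → Fin n) (hmono : StrictMono f)
    (hcover : ∀ e ∈ G.edgeFinset, ∃ j : Fin k, f j ∈ e)
    (E : Fin k → Finset (Sym2 (Fin n)))
    (hE : ∀ j : Fin k,
      E j = G.edgeFinset.filter (fun e => f j ∈ e ∧ ∀ j' : Fin k, j' < j → f j' ∉ e))
    (hne : ∀ j : Fin k, (E j).Nonempty) :
    ∀ j : Fin k, ∀ e ∈ E j,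
      Real.sqrt (∑ i, (edgePoint e i - clusterMean (E j) i) ^ 2)
        = Real.sqrt (1 - 1 / ((E j).card : ℝ)) ∧
      Real.sqrt (∑ i, (edgePoint e i - clusterMean (E j) i) ^ 2)
        ≤ Real.sqrt (2 / 3) := by
  intro j e he
  have star : E j ⊆ G.incidenceFinset (f j) := by
    intro x hx
    rw [hE, mem_filter, SimpleGraph.mem_edgeFinset] at hx
    exact (G.mem_incidenceFinset (f j) x).mpr ⟨hx.1, hx.2.1⟩
  convert stmt_13_general (hdeg (f j)) star he using 3
  norm_num
end

section
/- Let X be a finite set of points in ℝ^d, let dist : X × X → ℝ₊ be a function, and for each j let d*_j denote the maximum spacing over all partitions of X into j+1 nonempty groups induced by the leaves of a standard axis-aligned decision tree with j+1 leaves. Let L be a partition of X into i+1 nonempty groups induced by a standard decision tree, with i+2 ≤ |X|, such that sp(L) = d*_i. Then there exist a group ℓ ∈ L and an axis-aligned cut γ = (coordinate, threshold) splitting the points of ℓ into two nonempty sets such that the partition L_{γ,ℓ} obtained from L by replacing ℓ with these two sets satisfies sp(L_{γ,ℓ}) ≥ d*_{i+1}; moreover L_{γ,ℓ} is induced by a standard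 decision tree with i+2 leaves. -/
open Finset
open scoped Classical

/-- A standard (axis-aligned) decision tree over `ℝ^d`: each internal node is labeled
by a coordinate and a threshold. -/
inductive DTree (d : ℕ) where
  | leaf : DTree d
  | node (i : Fin d) (θ : ℝ) (l r : DTree d) : DTree d

/-- The cells (regions of `ℝ^d`) associated with the leaves of a decision tree:
a point reaching a node goes left if its labeled coordinate is `≤` the threshold,
and right otherwise. -/
def DTree.cells {d : ℕ} : DTree d → List (Set (Fin d → ℝ))
  | .leaf => [Set.univ]
  | .node i θ l r =>
      (l.cells.map fun c => {x : Fin d → ℝ | x i ≤ θ} ∩ c) ++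
      (r.cells.map fun c => {x : Fin d → ℝ | θ < x i} ∩ c)

/-- The groups of points of `X` reaching each leaf of the tree `t`. -/
noncomputable def inducedGroups {d : ℕ} (X : Finset (Fin d → ℝ)) (t : DTree d) :
    List (Finset (Fin d → ℝ)) :=
  t.cells.map fun c => X.filter (· ∈ c)

/-- `P` is a partition of `X` into `m` nonempty groups induced by the leaves of a
standard axis-aligned decision tree with `m` leaves (an explainable partition). -/
noncomputable def IsExplainablePartition {d : ℕ} (X : Finset (Fin d → ℝ)) (m : ℕ)
    (P : Finset (Finset (Fin d → ℝ))) : Prop :=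
  ∃ t : DTree d, t.cells.length = m ∧ (∀ s ∈ inducedGroups X t, s.Nonempty) ∧
    P = (inducedGroups X t).toFinset

/-- The spacing of a partition `P` with respect to a distance function `dist`. -/
noncomputable def spacing {α : Type*} (dist : α → α → ℝ) (P : Finset (Finset α)) : ℝ :=
  sInf {r : ℝ | ∃ s ∈ P, ∃ s' ∈ P, s ≠ s' ∧ ∃ x ∈ s, ∃ y ∈ s', r = dist x y}

/-- The maximum spacing over all explainable partitions of `X` into `m` nonempty groups. -/
noncomputable def maxSpacing {d : ℕ} (X : Finset (Fin d → ℝ))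
    (dist : (Fin d → ℝ) → (Fin d → ℝ) → ℝ) (m : ℕ) : ℝ :=
  sSup {r : ℝ | ∃ P : Finset (Finset (Fin d → ℝ)),
    IsExplainablePartition X m P ∧ r = spacing dist P}

/-!
Merging two sibling leaves of a tree gives a coarser partition, whose spacing is at least as large.
Hence `d*_{i+1} ≤ d*_i` for `i ≥ 1`, and points from distinct groups of `L` are at distance at least
`d*_{i+1}`. Now let `P` be an optimal partition into `i + 2` groups; one exists because `X` has at
least `i + 2` points. As `L` has fewer groups than `P`, it does not refine `P`, so some `ℓ ∈ L`
meets two groups of `P`. Descend the tree of `P` until a node splits `ℓ`: the cut of that node only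
separates points of `ℓ` lying in distinct groups of `P`, hence at distance at least `d*_{i+1}`.
-/

section Spacing

variable {α : Type*} {dist : α → α → ℝ} {r r' : ℝ} {P : Finset (Finset α)}

/-- Points in distinct groups of `P` are at distance at least `r`. This is `r ≤ spacing dist P`,
freed from the value `sInf ∅ = 0` taken by the spacing when there are no such points. -/
def IsSpaced (dist : α → α → ℝ) (r : ℝ) (P : Finset (Finset α)) : Prop :=
  (P : Set (Finset α)).Pairwise fun s t => ∀ x ∈ s, ∀ y ∈ t, r ≤ dist x y

lemma IsSpaced.of_le (h : IsSpaced dist r P) (hr : r' ≤ r) : IsSpaced dist r' P :=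
  h.imp fun _ _ hst x hx y hy => hr.trans (hst x hx y hy)

lemma isSpaced_of_card_le_one (hP : #P ≤ 1) : IsSpaced dist r P :=
  (Finset.card_le_one_iff_subsingleton.1 hP).pairwise _

lemma isSpaced_spacing (dist : α → α → ℝ) (P : Finset (Finset α)) :
    IsSpaced dist (spacing dist P) P := by
  intro s hs t ht hst x hx y hy
  refine csInf_le (Set.Finite.bddBelow ?_) ⟨s, hs, t, ht, hst, x, hx, y, hy, rfl⟩
  refine ((P.biUnion id ×ˢ P.biUnion id).image fun p => dist p.1 p.2).finite_toSet.subset ?_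
  rintro _ ⟨s, hs, t, ht, -, x, hx, y, hy, rfl⟩
  exact Finset.mem_image.2 ⟨(x, y), Finset.mem_product.2
    ⟨Finset.mem_biUnion.2 ⟨s, hs, hx⟩, Finset.mem_biUnion.2 ⟨t, ht, hy⟩⟩, rfl⟩

lemma le_spacing_iff_isSpaced (hne : ∀ s ∈ P, s.Nonempty) (hcard : 1 < #P) :
    r ≤ spacing dist P ↔ IsSpaced dist r P := by
  refine ⟨(isSpaced_spacing dist P).of_le, fun h => le_csInf ?_ ?_⟩
  · obtain ⟨s, hs, t, ht, hst⟩ := Finset.one_lt_card.1 hcard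
    obtain ⟨x, hx⟩ := hne s hs
    obtain ⟨y, hy⟩ := hne t ht
    exact ⟨_, s, hs, t, ht, hst, x, hx, y, hy, rfl⟩
  · rintro _ ⟨s, hs, t, ht, hst, x, hx, y, hy, rfl⟩
    exact h hs ht hst x hx y hy

lemma IsSpaced.insert_insert_erase [DecidableEq α] {s t u : Finset α} (h : IsSpaced dist r P)
    (hs : s ∈ P) (ht : t ⊆ s) (hu : u ⊆ s)
    (htu : ∀ x ∈ t, ∀ y ∈ u, r ≤ dist x y ∧ r ≤ dist y x) :
    IsSpaced dist r (insert t (insert u (P.erase s))) := by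
  have le_dist_erase {v : Finset α} (hv : v ⊆ s) {w : Finset α} (hw : w ∈ P.erase s) :
      (∀ x ∈ v, ∀ y ∈ w, r ≤ dist x y) ∧ ∀ x ∈ w, ∀ y ∈ v, r ≤ dist x y := by
    obtain ⟨hws, hwP⟩ := Finset.mem_erase.1 hw
    exact ⟨fun x hx y hy => h hs hwP hws.symm x (hv hx) y hy,
      fun x hx y hy => h hwP hs hws x hx y (hv hy)⟩
  unfold IsSpaced
  rw [Finset.coe_insert, Finset.coe_insert, Set.pairwise_insert, Set.pairwise_insert]
  refine ⟨⟨h.mono (Finset.coe_subset.2 (P.erase_subset s)), fun w hw _ => le_dist_erase hu hw⟩, ?_⟩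
  rintro w (rfl | hw) -
  · exact ⟨fun x hx y hy => (htu x hx y hy).1, fun x hx y hy => (htu y hy x hx).2⟩
  · exact le_dist_erase ht hw

variable [DecidableEq α] {S : Finset α}

lemma IsSpaced.le_dist {𝒜 : Finpartition S} (h : IsSpaced dist r 𝒜.parts) {x y : α} (hx : x ∈ S)
    (hy : y ∈ S) (hxy : ∀ s ∈ 𝒜.parts, x ∈ s → y ∉ s) : r ≤ dist x y := by
  obtain ⟨s, hs, hxs⟩ := 𝒜.exists_mem hx
  obtain ⟨t, ht, hyt⟩ := 𝒜.exists_mem hy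
  refine h hs ht ?_ x hxs y hyt
  rintro rfl
  exact hxy s hs hxs hyt

lemma IsSpaced.of_refinement {𝒜 ℬ : Finpartition S} (h : IsSpaced dist r 𝒜.parts) (hle : 𝒜 ≤ ℬ) :
    IsSpaced dist r ℬ.parts := by
  intro s hs t ht hst x hx y hy
  refine h.le_dist (ℬ.subset hs hx) (ℬ.subset ht hy) fun u hu hxu hyu => hst ?_
  obtain ⟨v, hv, huv⟩ := hle hu
  exact (ℬ.eq_of_mem_parts hs hv hx (huv hxu)).trans (ℬ.eq_of_mem_parts hv ht (huv hyu) hy)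

lemma exists_one_lt_card_of_card_parts_lt (𝒜 : Finpartition S) (h : #𝒜.parts < #S) :
    ∃ s ∈ 𝒜.parts, 1 < #s :=
  Finset.exists_lt_of_sum_lt (by simpa [𝒜.sum_card_parts] using h)

end Spacing

variable {d : ℕ} {X : Finset (Fin d → ℝ)} {m n : ℕ} {P Q : Finset (Finset (Fin d → ℝ))}
  {c : Fin d} {θ : ℝ} {dist : (Fin d → ℝ) → (Fin d → ℝ) → ℝ}

lemma inducedGroups_leaf (X : Finset (Fin d → ℝ)) : inducedGroups X .leaf = [X] := by
  simp [inducedGroups, DTree.cells]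

lemma inducedGroups_node (X : Finset (Fin d → ℝ)) (c : Fin d) (θ : ℝ) (l r : DTree d) :
    inducedGroups X (.node c θ l r) =
      inducedGroups {x ∈ X | x c ≤ θ} l ++ inducedGroups {x ∈ X | θ < x c} r := by
  simp [inducedGroups, DTree.cells, Function.comp_def, Finset.filter_filter]

lemma exists_cut_of_one_lt_card {s : Finset (Fin d → ℝ)} (hs : 1 < #s) :
    ∃ c θ, {x ∈ s | x c ≤ θ}.Nonempty ∧ {x ∈ s | θ < x c}.Nonempty := by
  obtain ⟨x, hx, y, hy, hxy⟩ := Finset.one_lt_card.1 hs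
  obtain ⟨c, hc⟩ := Function.ne_iff.1 hxy
  wlog hlt : x c < y c generalizing x y
  · exact this y hy x hx hxy.symm hc.symm (hc.lt_or_gt.resolve_left hlt)
  exact ⟨c, x c, ⟨x, Finset.mem_filter.2 ⟨hx, le_rfl⟩⟩, ⟨y, Finset.mem_filter.2 ⟨hy, hlt⟩⟩⟩

/-- The partition `L_{γ,ℓ}`: the group `ℓ` of `L` is replaced with the two sets into which the cut
`γ = (c, θ)` splits it. -/
noncomputable def cutGroup (L : Finset (Finset (Fin d → ℝ))) (ℓ : Finset (Fin d → ℝ)) (c : Fin d)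
    (θ : ℝ) : Finset (Finset (Fin d → ℝ)) :=
  insert {x ∈ ℓ | x c ≤ θ} (insert {x ∈ ℓ | θ < x c} (L.erase ℓ))

namespace IsExplainablePartition

lemma singleton (hX : X.Nonempty) : IsExplainablePartition X 1 {X} :=
  ⟨.leaf, by simp [DTree.cells], by simpa [inducedGroups_leaf], by simp [inducedGroups_leaf]⟩

lemma union (hP : IsExplainablePartition {x ∈ X | x c ≤ θ} m P)
    (hQ : IsExplainablePartition {x ∈ X | θ < x c} n Q) :
    IsExplainablePartition X (m + n) (P ∪ Q) := by
  obtain ⟨l, rfl, hl, rfl⟩ := hP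
  obtain ⟨r, rfl, hr, rfl⟩ := hQ
  refine ⟨.node c θ l r, by simp [DTree.cells], ?_, ?_⟩
  · simpa [inducedGroups_node, or_imp, forall_and] using ⟨hl, hr⟩
  · rw [inducedGroups_node, List.toFinset_append]

@[elab_as_elim]
theorem induction_on
    {motive : ∀ X m P, IsExplainablePartition (d := d) X m P → Prop}
    (hP : IsExplainablePartition X m P)
    (singleton : ∀ X hX, motive X 1 {X} (singleton hX))
    (union : ∀ X c θ m n P Q (hP : IsExplainablePartition {x ∈ X | x c ≤ θ} m P)
      (hQ : IsExplainablePartition {x ∈ X | θ < x c} n Q), motive _ m P hP → motive _ n Q hQ →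
      motive X (m + n) (P ∪ Q) (hP.union hQ)) :
    motive X m P hP := by
  obtain ⟨t, hm, hne, hP⟩ := hP
  induction t generalizing X m P with
  | leaf =>
    rw [inducedGroups_leaf] at hne hP
    obtain rfl : m = 1 := hm.symm
    obtain rfl : P = {X} := hP
    exact singleton X (hne X (List.mem_singleton_self X))
  | node c θ l r ihl ihr =>
    obtain rfl : l.cells.length + r.cells.length = m := by simpa [DTree.cells] using hm
    rw [inducedGroups_node] at hne hP
    rw [List.toFinset_append] at hP
    subst hP
    have hl := fun s hs => hne s (List.mem_append_left _ hs)
    have hr := fun s hs => hne s (List.mem_append_right _ hs)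
    exact union X c θ _ _ _ _ ⟨l, rfl, hl, rfl⟩ ⟨r, rfl, hr, rfl⟩ (ihl rfl hl rfl) (ihr rfl hr rfl)

lemma nonempty_of_mem (hP : IsExplainablePartition X m P) {s : Finset (Fin d → ℝ)} (hs : s ∈ P) :
    s.Nonempty := by
  obtain ⟨t, -, hne, rfl⟩ := hP
  exact hne s (List.mem_toFinset.1 hs)

lemma subset_of_mem (hP : IsExplainablePartition X m P) {s : Finset (Fin d → ℝ)} (hs : s ∈ P) :
    s ⊆ X := by
  obtain ⟨t, -, -, rfl⟩ := hP
  obtain ⟨cell, -, rfl⟩ := List.mem_map.1 (List.mem_toFinset.1 hs)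
  exact Finset.filter_subset _ _

lemma apply_le (hP : IsExplainablePartition {x ∈ X | x c ≤ θ} m P) {s : Finset (Fin d → ℝ)}
    (hs : s ∈ P) {x : Fin d → ℝ} (hx : x ∈ s) : x c ≤ θ :=
  (Finset.mem_filter.1 (hP.subset_of_mem hs hx)).2

lemma lt_apply (hP : IsExplainablePartition {x ∈ X | θ < x c} m P) {s : Finset (Fin d → ℝ)}
    (hs : s ∈ P) {x : Fin d → ℝ} (hx : x ∈ s) : θ < x c :=
  (Finset.mem_filter.1 (hP.subset_of_mem hs hx)).2

lemma disjoint (hP : IsExplainablePartition {x ∈ X | x c ≤ θ} m P)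
    (hQ : IsExplainablePartition {x ∈ X | θ < x c} n Q) : Disjoint P Q := by
  refine Finset.disjoint_left.2 fun s hsP hsQ => ?_
  obtain ⟨x, hx⟩ := hP.nonempty_of_mem hsP
  exact (hP.apply_le hsP hx).not_gt (hQ.lt_apply hsQ hx)

lemma existsUnique_mem (hP : IsExplainablePartition X m P) :
    ∀ x ∈ X, ∃! s, s ∈ P ∧ x ∈ s := by
  induction hP using induction_on with
  | singleton X _ => exact fun x hx => ⟨X, by simpa, by simp⟩
  | union X c θ m n P Q hP hQ ihP ihQ =>
    intro x hx
    rcases le_or_gt (x c) θ with hxc | hxc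
    · obtain ⟨s, ⟨hs, hxs⟩, huniq⟩ := ihP x (Finset.mem_filter.2 ⟨hx, hxc⟩)
      refine ⟨s, ⟨Finset.mem_union_left _ hs, hxs⟩, fun t ⟨ht, hxt⟩ => ?_⟩
      rcases Finset.mem_union.1 ht with ht | ht
      · exact huniq t ⟨ht, hxt⟩
      · exact absurd hxc (hQ.lt_apply ht hxt).not_ge
    · obtain ⟨s, ⟨hs, hxs⟩, huniq⟩ := ihQ x (Finset.mem_filter.2 ⟨hx, hxc⟩)
      refine ⟨s, ⟨Finset.mem_union_right _ hs, hxs⟩, fun t ⟨ht, hxt⟩ => ?_⟩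
      rcases Finset.mem_union.1 ht with ht | ht
      · exact absurd hxc (hP.apply_le ht hxt).not_gt
      · exact huniq t ⟨ht, hxt⟩

/-- An explainable partition as a `Finpartition`, which makes the order by refinement and the
general facts on partitions available. -/
noncomputable def toFinpartition (hP : IsExplainablePartition X m P) : Finpartition X :=
  .ofExistsUnique P (fun _ => hP.subset_of_mem) hP.existsUnique_mem
    fun h => Finset.not_nonempty_empty (hP.nonempty_of_mem h)

lemma card_eq (hP : IsExplainablePartition X m P) : #P = m := by
  induction hP using induction_on with
  | singleton X _ => exact Finset.card_singleton X
  | union X c θ m n P Q hP hQ ihP ihQ =>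
    rw [Finset.card_union_of_disjoint (hP.disjoint hQ), ihP, ihQ]

lemma pos (hP : IsExplainablePartition X m P) : 0 < m := by
  induction hP using induction_on with
  | singleton => exact one_pos
  | union _ _ _ _ n _ _ _ _ ihP _ => exact Nat.add_pos_left ihP n

protected lemma cutGroup (hP : IsExplainablePartition X m P) {s : Finset (Fin d → ℝ)} (hs : s ∈ P)
    (hle : {x ∈ s | x c ≤ θ}.Nonempty) (hlt : {x ∈ s | θ < x c}.Nonempty) :
    IsExplainablePartition X (m + 1) (cutGroup P s c θ) := by
  unfold cutGroup
  induction hP using induction_on with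
  | singleton X _ =>
    obtain rfl := Finset.mem_singleton.1 hs
    rw [Finset.erase_singleton, insert_empty_eq, Finset.insert_eq]
    exact (singleton hle).union (singleton hlt)
  | union X c' θ' m n P Q hP hQ ihP ihQ =>
    rcases Finset.mem_union.1 hs with hs | hs
    · have hsQ : s ∉ Q := Finset.disjoint_left.1 (hP.disjoint hQ) hs
      simpa [Finset.erase_union_distrib, Finset.erase_eq_of_notMem hsQ, add_right_comm] using
        (ihP hs).union hQ
    · have hsP : s ∉ P := Finset.disjoint_right.1 (hP.disjoint hQ) hs
      simpa [Finset.erase_union_distrib, Finset.erase_eq_of_notMem hsP, add_assoc] using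
        hP.union (ihQ hs)

lemma nonempty (hP : IsExplainablePartition X m P) : X.Nonempty := by
  induction hP using induction_on with
  | singleton _ hX => exact hX
  | union X _ _ _ _ _ _ _ _ ihP _ => exact ihP.mono (Finset.filter_subset _ X)

lemma exists_coarsening (hP : IsExplainablePartition X m P) (hm : 1 < m) :
    ∃ (Q : _) (hQ : IsExplainablePartition X (m - 1) Q),
      hP.toFinpartition ≤ hQ.toFinpartition := by
  suffices h : ∃ Q, IsExplainablePartition X (m - 1) Q ∧ ∀ s ∈ P, ∃ t ∈ Q, s ⊆ t by
    obtain ⟨Q, hQ, hPQ⟩ := h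
    exact ⟨Q, hQ, fun s hs => hPQ s hs⟩
  induction hP using induction_on with
  | singleton => exact absurd hm (lt_irrefl 1)
  | union X c θ m n P Q hP hQ ihP ihQ =>
    by_cases hm₁ : 1 < m
    · obtain ⟨P', hP', hPP'⟩ := ihP hm₁
      refine ⟨P' ∪ Q, Nat.sub_add_comm hP.pos ▸ hP'.union hQ, fun s hs => ?_⟩
      rcases Finset.mem_union.1 hs with hs | hs
      · obtain ⟨t, ht, hst⟩ := hPP' s hs
        exact ⟨t, Finset.mem_union_left _ ht, hst⟩
      · exact ⟨s, Finset.mem_union_right _ hs, subset_rfl⟩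
    by_cases hn₁ : 1 < n
    · obtain ⟨Q', hQ', hQQ'⟩ := ihQ hn₁
      refine ⟨P ∪ Q', Nat.add_sub_assoc hQ.pos m ▸ hP.union hQ', fun s hs => ?_⟩
      rcases Finset.mem_union.1 hs with hs | hs
      · exact ⟨s, Finset.mem_union_left _ hs, subset_rfl⟩
      · obtain ⟨t, ht, hst⟩ := hQQ' s hs
        exact ⟨t, Finset.mem_union_right _ ht, hst⟩
    have := hP.pos
    have := hQ.pos
    obtain ⟨rfl, rfl⟩ : m = 1 ∧ n = 1 := by lia
    exact ⟨{X}, singleton (hP.union hQ).nonempty, fun s hs =>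
      ⟨X, Finset.mem_singleton_self X, (hP.union hQ).subset_of_mem hs⟩⟩

lemma exists_separating_cut (hP : IsExplainablePartition X m P) {S : Finset (Fin d → ℝ)}
    (hSX : S ⊆ X) (hS : ∀ s ∈ P, ¬ S ⊆ s) :
    ∃ c θ, {x ∈ S | x c ≤ θ}.Nonempty ∧ {x ∈ S | θ < x c}.Nonempty ∧
      ∀ x ∈ S, ∀ y ∈ S, x c ≤ θ → θ < y c → ∀ s ∈ P, x ∈ s → y ∉ s := by
  induction hP using induction_on with
  | singleton X _ => exact absurd hSX (hS X (Finset.mem_singleton_self X))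
  | union X c θ m n P Q hP hQ ihP ihQ =>
    rcases {x ∈ S | x c ≤ θ}.eq_empty_or_nonempty with hle | hle
    · have hright : ∀ x ∈ S, θ < x c := by simpa [Finset.filter_eq_empty_iff] using hle
      obtain ⟨c', θ', hle', hlt', hsep⟩ := ihQ
        (fun x hx => Finset.mem_filter.2 ⟨hSX hx, hright x hx⟩)
        (fun s hs => hS s (Finset.mem_union_right _ hs))
      refine ⟨c', θ', hle', hlt', fun x hx y hy hxc hyc s hs hxs => ?_⟩
      rcases Finset.mem_union.1 hs with hs | hs
      · exact absurd (hright x hx) (hP.apply_le hs hxs).not_gt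
      · exact hsep x hx y hy hxc hyc s hs hxs
    rcases {x ∈ S | θ < x c}.eq_empty_or_nonempty with hlt | hlt
    · have hleft : ∀ x ∈ S, x c ≤ θ := by simpa [Finset.filter_eq_empty_iff] using hlt
      obtain ⟨c', θ', hle', hlt', hsep⟩ := ihP
        (fun x hx => Finset.mem_filter.2 ⟨hSX hx, hleft x hx⟩)
        (fun s hs => hS s (Finset.mem_union_left _ hs))
      refine ⟨c', θ', hle', hlt', fun x hx y hy hxc hyc s hs hxs => ?_⟩
      rcases Finset.mem_union.1 hs with hs | hs
      · exact hsep x hx y hy hxc hyc s hs hxs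
      · exact absurd (hleft x hx) (hQ.lt_apply hs hxs).not_ge
    refine ⟨c, θ, hle, hlt, fun x _ y _ hxc hyc s hs hxs hys => ?_⟩
    rcases Finset.mem_union.1 hs with hs | hs
    · exact hyc.not_ge (hP.apply_le hs hys)
    · exact hxc.not_gt (hQ.lt_apply hs hxs)

lemma exists_isSpaced_cutGroup (hP : IsExplainablePartition X m P) {r : ℝ}
    (hPr : IsSpaced dist r P) (𝒜 : Finpartition X) (hcard : #𝒜.parts < m)
    (h𝒜r : IsSpaced dist r 𝒜.parts) :
    ∃ s ∈ 𝒜.parts, ∃ c θ, {x ∈ s | x c ≤ θ}.Nonempty ∧ {x ∈ s | θ < x c}.Nonempty ∧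
      IsSpaced dist r (cutGroup 𝒜.parts s c θ) := by
  have not_refines : ¬ 𝒜 ≤ hP.toFinpartition := fun h =>
    (Finpartition.card_mono h).not_gt (hcard.trans_eq hP.card_eq.symm)
  obtain ⟨s, hs, hsP⟩ : ∃ s ∈ 𝒜.parts, ∀ t ∈ P, ¬ s ⊆ t := by
    contrapose! not_refines
    exact fun s hs => not_refines s hs
  obtain ⟨c, θ, hle, hlt, hsep⟩ := hP.exists_separating_cut (𝒜.subset hs) hsP
  refine ⟨s, hs, c, θ, hle, hlt, h𝒜r.insert_insert_erase hs (Finset.filter_subset _ s)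
    (Finset.filter_subset _ s) fun x hx y hy => ?_⟩
  obtain ⟨hxs, hxc⟩ := Finset.mem_filter.1 hx
  obtain ⟨hys, hyc⟩ := Finset.mem_filter.1 hy
  have hxy := hsep x hxs y hys hxc hyc
  have hPr' : IsSpaced dist r hP.toFinpartition.parts := hPr
  exact ⟨hPr'.le_dist (𝒜.subset hs hxs) (𝒜.subset hs hys) hxy,
    hPr'.le_dist (𝒜.subset hs hys) (𝒜.subset hs hxs) fun t ht hyt hxt => hxy t ht hxt hyt⟩

lemma exists_succ (hP : IsExplainablePartition X m P) (hm : m < #X) :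
    ∃ Q, IsExplainablePartition X (m + 1) Q := by
  obtain ⟨s, hs, hcard⟩ := exists_one_lt_card_of_card_parts_lt hP.toFinpartition
    (hP.card_eq.trans_lt hm)
  obtain ⟨c, θ, hle, hlt⟩ := exists_cut_of_one_lt_card hcard
  exact ⟨_, hP.cutGroup hs hle hlt⟩

lemma le_spacing_iff (hP : IsExplainablePartition X m P) (hm : 1 < m) {r : ℝ} :
    r ≤ spacing dist P ↔ IsSpaced dist r P :=
  le_spacing_iff_isSpaced (fun _ => hP.nonempty_of_mem) (hP.card_eq.symm ▸ hm)

end IsExplainablePartition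

variable (dist)

lemma finite_spacings (X : Finset (Fin d → ℝ)) (m : ℕ) :
    {r : ℝ | ∃ P, IsExplainablePartition X m P ∧ r = spacing dist P}.Finite := by
  refine (X.powerset.powerset.image (spacing dist)).finite_toSet.subset ?_
  rintro _ ⟨P, hP, rfl⟩
  exact Finset.mem_image_of_mem _ (Finset.mem_powerset.2 fun s hs =>
    Finset.mem_powerset.2 (hP.subset_of_mem hs))

lemma spacing_le_maxSpacing (hP : IsExplainablePartition X m P) :
    spacing dist P ≤ maxSpacing X dist m :=
  le_csSup (finite_spacings dist X m).bddAbove ⟨P, hP, rfl⟩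

lemma exists_spacing_eq_maxSpacing (h : ∃ P, IsExplainablePartition X m P) :
    ∃ P, IsExplainablePartition X m P ∧ spacing dist P = maxSpacing X dist m := by
  have hne : {r : ℝ | ∃ P, IsExplainablePartition X m P ∧ r = spacing dist P}.Nonempty :=
    h.imp' (spacing dist) fun P hP => ⟨P, hP, rfl⟩
  obtain ⟨P, hP, hmax⟩ := hne.csSup_mem (finite_spacings dist X m)
  exact ⟨P, hP, hmax.symm⟩

lemma maxSpacing_succ_le (hm : 1 < m) (h : ∃ P, IsExplainablePartition X (m + 1) P) :
    maxSpacing X dist (m + 1) ≤ maxSpacing X dist m := by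
  obtain ⟨P, hP, hmax⟩ := exists_spacing_eq_maxSpacing dist h
  obtain ⟨Q, hQ, hPQ⟩ := hP.exists_coarsening (Nat.lt_succ_of_lt hm)
  have hspaced : IsSpaced dist (spacing dist P) Q :=
    IsSpaced.of_refinement (𝒜 := hP.toFinpartition) (isSpaced_spacing dist P) hPQ
  rw [← hmax]
  exact ((hQ.le_spacing_iff hm).2 hspaced).trans (spacing_le_maxSpacing dist hQ)

theorem stmt_16_general (i : ℕ) (hcard : i + 2 ≤ #X)
    (L : Finset (Finset (Fin d → ℝ))) (hL : IsExplainablePartition X (i + 1) L)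
    (hopt : spacing dist L = maxSpacing X dist (i + 1)) :
    ∃ ℓ ∈ L, ∃ c : Fin d, ∃ θ : ℝ, {x ∈ ℓ | x c ≤ θ}.Nonempty ∧ {x ∈ ℓ | θ < x c}.Nonempty ∧
      spacing dist (cutGroup L ℓ c θ) ≥ maxSpacing X dist (i + 2) ∧
      IsExplainablePartition X (i + 2) (cutGroup L ℓ c θ) := by
  have hex : ∃ P, IsExplainablePartition X (i + 2) P := hL.exists_succ hcard
  obtain ⟨P, hP, hPmax⟩ := exists_spacing_eq_maxSpacing dist hex
  have hPspaced : IsSpaced dist (maxSpacing X dist (i + 2)) P := hPmax ▸ isSpaced_spacing dist P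
  have hLspaced : IsSpaced dist (maxSpacing X dist (i + 2)) L := by
    rcases i.eq_zero_or_pos with rfl | hi
    · exact isSpaced_of_card_le_one hL.card_eq.le
    · exact (isSpaced_spacing dist L).of_le
        ((maxSpacing_succ_le dist (Nat.succ_lt_succ hi) hex).trans_eq hopt.symm)
  obtain ⟨ℓ, hℓ, c, θ, hle, hlt, hspaced⟩ := hP.exists_isSpaced_cutGroup hPspaced
    hL.toFinpartition (hL.card_eq.trans_lt (Nat.lt_succ_self _)) hLspaced
  have hcut : IsExplainablePartition X (i + 2) (cutGroup L ℓ c θ) := hL.cutGroup hℓ hle hlt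
  exact ⟨ℓ, hℓ, c, θ, hle, hlt, (hcut.le_spacing_iff (by lia)).2 hspaced, hcut⟩

theorem stmt_16 {d : ℕ} (X : Finset (Fin d → ℝ))
    (dist : (Fin d → ℝ) → (Fin d → ℝ) → ℝ) (hdist : ∀ x y, 0 ≤ dist x y)
    (i : ℕ) (hcard : i + 2 ≤ X.card)
    (L : Finset (Finset (Fin d → ℝ)))
    (hL : IsExplainablePartition X (i + 1) L)
    (hopt : spacing dist L = maxSpacing X dist (i + 1)) :
    ∃ ℓ ∈ L, ∃ c : Fin d, ∃ θ : ℝ,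
      (ℓ.filter fun x => x c ≤ θ).Nonempty ∧
      (ℓ.filter fun x => θ < x c).Nonempty ∧
      spacing dist
          (insert (ℓ.filter fun x => x c ≤ θ)
            (insert (ℓ.filter fun x => θ < x c) (L.erase ℓ)))
        ≥ maxSpacing X dist (i + 2) ∧
      IsExplainablePartition X (i + 2)
        (insert (ℓ.filter fun x => x c ≤ θ)
          (insert (ℓ.filter fun x => θ < x c) (L.erase ℓ))) :=
  stmt_16_general dist i hcard L hL hopt
end
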